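/- Let (A_m)_{m≥1} be a nondecreasing sequence of Borel subsets of C and let A = ⋃_{m=1}^∞ A_m. Then μ(A_m) converges to μ(A) as m → ∞ (equivalently, sup_{m≥1} μ(A_m) = μ(A)). -/

import Mathlib

open MeasureTheory Matrix Set Filter Topology
open scoped ENNReal

noncomputable section

/-- The space `C` of continuous functions on `[0,1]` vanishing at `0`,
with the supremum metric (inherited from `C([0,1], ℝ)`). -/
abbrev Cz : Type := {f : C(Set.Icc (0:ℝ) 1, ℝ) // f ⟨0, ⟨le_refl 0, zero_le_one⟩⟩ = 0}

/-- The projection `π_n : C → ℝ^n`, `x ↦ (x(t_1), …, x(t_n))`. -/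
def proj (t : ℕ → ℝ) (ht : ∀ k, t k ∈ Set.Ioc (0:ℝ) 1) (n : ℕ) (x : Cz) : Fin n → ℝ :=
  fun i => (x : C(Set.Icc (0:ℝ) 1, ℝ)) ⟨t i, Set.Ioc_subset_Icc_self (ht i)⟩

/-- The covariance matrix `M_n` with entries `min (t j) (t r)`. -/
def covM (t : ℕ → ℝ) (n : ℕ) : Matrix (Fin n) (Fin n) ℝ :=
  Matrix.of fun j r => min (t (j : ℕ)) (t (r : ℕ))

/-- The centered Gaussian measure on `ℝ^n` with (positive definite) covariance matrix `M`:
the measure with density `u ↦ ((2π)^n det M)^{-1/2} exp (-⟨u, M⁻¹ u⟩ / 2)` w.r.t. Lebesgue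
measure. -/
def gauss (n : ℕ) (M : Matrix (Fin n) (Fin n) ℝ) : Measure (Fin n → ℝ) :=
  volume.withDensity fun u =>
    ENNReal.ofReal ((((2 * Real.pi) ^ n * M.det) ^ (-(1:ℝ)/2 : ℝ)) *
      Real.exp (-(u ⬝ᵥ M⁻¹.mulVec u) / 2))

/-- `φ(K) = inf_{n ≥ 1} ν_n (π_n(K))`. -/
def phi (t : ℕ → ℝ) (ht : ∀ k, t k ∈ Set.Ioc (0:ℝ) 1) (K : Set Cz) : ℝ≥0∞ :=
  ⨅ n : ℕ, gauss (n+1) (covM t (n+1)) (proj t ht (n+1) '' K)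

/-- `μ(A) = sup {φ(K) : K ⊆ A, K compact}`. -/
def mu (t : ℕ → ℝ) (ht : ∀ k, t k ∈ Set.Ioc (0:ℝ) 1) (A : Set Cz) : ℝ≥0∞ :=
  ⨆ (K : Set Cz) (_ : K ⊆ A) (_ : IsCompact K), phi t ht K

instance : MeasurableSpace Cz := borel Cz
instance : BorelSpace Cz := ⟨rfl⟩


open ProbabilityTheory

def indS (s : ℝ) : Lp ℝ 2 (volume : Measure ℝ) :=
  indicatorConstLp 2 (measurableSet_Ioc (a := (0:ℝ)) (b := s)) measure_Ioc_lt_top.ne (1:ℝ)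

lemma indS_inner {s u : ℝ} (hs : 0 ≤ s) (hu : 0 ≤ u) : inner ℝ (indS s) (indS u) = min s u := by
  unfold indS
  rw [MeasureTheory.L2.inner_indicatorConstLp_indicatorConstLp _ _
    measure_Ioc_lt_top.ne measure_Ioc_lt_top.ne]
  simp [Ioc_inter_Ioc, Measure.real]
  rw [← ENNReal.ofReal_min, ENNReal.toReal_ofReal (le_min hs hu)]

lemma indS_li {t : ℕ → ℝ} (ht : ∀ k, t k ∈ Set.Ioc (0:ℝ) 1) (htinj : Function.Injective t) :
    LinearIndependent ℝ (fun k => indS (t k)) := by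
  rw [linearIndependent_iff']
  intro S c hc k hk
  have key : ∀ u : ℝ, 0 ≤ u → ∑ j ∈ S, c j * min (t j) u = 0 := by
    intro u hu
    have h := congrArg (fun v => inner ℝ v (indS u)) hc
    simp only [sum_inner, inner_zero_left, real_inner_smul_left] at h
    rw [← h]
    refine Finset.sum_congr rfl fun j _ => ?_
    rw [indS_inner (ht j).1.le hu]
  obtain ⟨h, hh, hh1, hh2⟩ : ∃ h : ℝ, 0 < h ∧ h ≤ t k ∧ ∀ j ∈ S, j ≠ k → h ≤ |t j - t k| := by
    have : ∀ᶠ h in 𝓝[>] (0:ℝ), h ≤ t k ∧ ∀ j ∈ S, j ≠ k → h ≤ |t j - t k| := by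
      apply Filter.Eventually.and
      · exact nhdsWithin_le_nhds (eventually_le_nhds (ht k).1)
      · rw [Filter.eventually_all_finset]
        intro j _
        by_cases hj : j = k
        · simp [hj]
        · have : 0 < |t j - t k| := abs_pos.2 (sub_ne_zero.2 fun h => hj (htinj h))
          exact nhdsWithin_le_nhds ((eventually_le_nhds this).mono fun _ h _ => h)
    obtain ⟨h, h1, h2⟩ := (this.and self_mem_nhdsWithin).exists
    exact ⟨h, h2, h1.1, h1.2⟩
  have e1 := key (t k + h) (by linarith)
  have e2 := key (t k - h) (by linarith)
  have e3 := key (t k) (ht k).1.le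
  have e : ∑ j ∈ S, c j * (min (t j) (t k + h) + min (t j) (t k - h) - 2 * min (t j) (t k)) = 0 := by
    have : ∑ j ∈ S, c j * (min (t j) (t k + h) + min (t j) (t k - h) - 2 * min (t j) (t k))
      = (∑ j ∈ S, c j * min (t j) (t k + h)) + (∑ j ∈ S, c j * min (t j) (t k - h))
        - 2 * ∑ j ∈ S, c j * min (t j) (t k) := by
      rw [Finset.mul_sum, ← Finset.sum_add_distrib, ← Finset.sum_sub_distrib]
      exact Finset.sum_congr rfl fun j _ => by ring
    rw [this, e1, e2, e3]; simp
  rw [Finset.sum_eq_single_of_mem k hk] at e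
  · rw [min_eq_left (by linarith), min_eq_right (by linarith), min_self] at e
    have : c k * (-h) = 0 := by rw [← e]; ring
    rcases mul_eq_zero.1 this with h | h
    · exact h
    · linarith
  · intro j hj hjk
    have := hh2 j hj hjk
    rcases le_or_gt (t j) (t k) with hl | hl
    · rw [abs_of_nonpos (by linarith)] at this
      rw [min_eq_left (by linarith), min_eq_left (by linarith), min_eq_left (by linarith)]; ring
    · rw [abs_of_pos (by linarith)] at this
      rw [min_eq_right (by linarith), min_eq_right (by linarith), min_eq_right (by linarith)]; ring

/-- existence of an infinite Cholesky factor -/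
lemma exists_chol {t : ℕ → ℝ} (ht : ∀ k, t k ∈ Set.Ioc (0:ℝ) 1) (htinj : Function.Injective t) :
    ∃ L : ℕ → ℕ → ℝ, (∀ n j, n < j → L n j = 0) ∧ (∀ n, L n n ≠ 0) ∧
      ∀ N n m, n < N → m < N → ∑ j ∈ Finset.range N, L n j * L m j = min (t n) (t m) := by
  have hli := indS_li ht htinj
  set f : ℕ → Lp ℝ 2 (volume : Measure ℝ) := fun k => indS (t k) with hf
  have horth := InnerProductSpace.gramSchmidtNormed_orthonormal hli
  set e := InnerProductSpace.gramSchmidtNormed ℝ f with he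
  have htri : ∀ n j, n < j → inner ℝ (e j) (f n) = 0 := by
    intro n j h
    rw [he, InnerProductSpace.gramSchmidtNormed, inner_smul_left,
      InnerProductSpace.gramSchmidt_inv_triangular ℝ f h, mul_zero]
  have hexp : ∀ N n, n < N → ∑ j ∈ Finset.range N, inner ℝ (e j) (f n) • e j = f n := by
    intro N n h
    have hmem : f n ∈ Submodule.span ℝ (e '' (Finset.range N : Set ℕ)) := by
      rw [he, InnerProductSpace.span_gramSchmidtNormed]
      refine Submodule.span_mono (image_mono ?_) (InnerProductSpace.mem_span_gramSchmidt ℝ f (le_refl n))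
      intro i hi
      simp only [Finset.coe_range, mem_Iio, mem_Iic] at *
      omega
    obtain ⟨c, hc⟩ := (Submodule.mem_span_image_finset_iff_exists_fun' ℝ).1 hmem
    conv_rhs => rw [← hc]
    refine Finset.sum_congr rfl fun j hj => ?_
    rw [← hc, horth.inner_right_sum c hj]
  refine ⟨fun n j => inner ℝ (e j) (f n), htri, ?_, ?_⟩
  · intro n h0
    have h1 := hexp (n+1) n (by omega)
    have h0' : inner ℝ (e n) (f n) = 0 := h0
    rw [Finset.sum_range_succ, h0', zero_smul, add_zero] at h1
    have h2 : f n ∈ Submodule.span ℝ (f '' Set.Iio n) := by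
      rw [← InnerProductSpace.span_gramSchmidt_Iio ℝ, ← InnerProductSpace.span_gramSchmidtNormed, ← h1]
      refine Submodule.sum_mem _ fun j hj => Submodule.smul_mem _ _ (Submodule.subset_span ⟨j, ?_, rfl⟩)
      simpa using hj
    exact hli.notMem_span_image (by simp) h2
  · intro N n m hn hm
    rw [← indS_inner (ht n).1.le (ht m).1.le]
    change _ = inner ℝ (f n) (f m)
    conv_rhs => rw [← hexp N n hn]
    simp [sum_inner, real_inner_smul_left]

lemma pi_gauss (n : ℕ) : Measure.pi (fun _ : Fin n => gaussianReal 0 1) =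
    volume.withDensity fun u => ENNReal.ofReal (∏ i, gaussianPDFReal 0 1 (u i)) := by
  refine Measure.pi_eq fun s hs => ?_
  rw [withDensity_apply _ (MeasurableSet.univ_pi hs), ← ofReal_integral_eq_lintegral_ofReal]
  · rw [volume_pi, Measure.restrict_pi_pi,
      integral_fintype_prod_eq_prod (f := fun _ => gaussianPDFReal 0 1),
      ENNReal.ofReal_prod_of_nonneg]
    · refine Finset.prod_congr rfl fun i _ => ?_
      rw [gaussianReal_apply_eq_integral _ one_ne_zero]
    · exact fun i _ => integral_nonneg fun x => gaussianPDFReal_nonneg _ _ _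
  · rw [volume_pi, Measure.restrict_pi_pi]
    exact Integrable.fintype_prod (f := fun _ => gaussianPDFReal 0 1)
      fun i => (integrable_gaussianPDFReal 0 1).restrict
  · exact ae_of_all _ fun u => Finset.prod_nonneg fun i _ => gaussianPDFReal_nonneg _ _ _

lemma map_gauss {n : ℕ} (L : Matrix (Fin n) (Fin n) ℝ) (hL : L.det ≠ 0) :
    (Measure.pi (fun _ : Fin n => gaussianReal 0 1)).map (fun x => L.mulVec x) = gauss n (L * Lᵀ) := by
  have hu : IsUnit L.det := hL.isUnit
  have hmeas : Measurable (fun x : Fin n → ℝ => L.mulVec x) := 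
    (Continuous.matrix_mulVec continuous_const continuous_id).measurable
  have hmeas' : Measurable (fun x : Fin n → ℝ => L⁻¹.mulVec x) := 
    (Continuous.matrix_mulVec continuous_const continuous_id).measurable
  rw [pi_gauss]
  set p : (Fin n → ℝ) → ℝ≥0∞ := fun u => ENNReal.ofReal (∏ i, gaussianPDFReal 0 1 (u i)) with hp
  have hpm : Measurable p := by
    refine ENNReal.measurable_ofReal.comp ?_
    refine Finset.measurable_prod _ fun i _ => ?_
    exact (measurable_gaussianPDFReal 0 1).comp (measurable_pi_apply i)
  have hcm : Measurable (fun u => p (L⁻¹.mulVec u)) := hpm.comp hmeas'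
  have hvol := Real.map_matrix_volume_pi_eq_smul_volume_pi hL
  have hvol' : Measure.map (fun x : Fin n → ℝ => L.mulVec x) volume
    = ENNReal.ofReal (abs (det L)⁻¹) • volume := by
    rw [← hvol]; rfl
  have h1 : (volume.withDensity p).map (fun x => L.mulVec x) =
      (Measure.map (fun x : Fin n → ℝ => L.mulVec x) volume).withDensity
        (fun u => p (L⁻¹.mulVec u)) := by
    ext s hs
    rw [Measure.map_apply hmeas hs, withDensity_apply _ (hmeas hs), withDensity_apply _ hs,
      setLIntegral_map hs hcm hmeas]
    simp [Matrix.mulVec_mulVec, Matrix.nonsing_inv_mul _ hu]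
  rw [h1, hvol', withDensity_smul_measure, ← withDensity_smul _ hcm, gauss]
  congr 1
  ext u
  simp only [Pi.smul_apply, smul_eq_mul, hp]
  rw [← ENNReal.ofReal_mul (abs_nonneg _)]
  congr 1
  simp only [gaussianPDFReal, sub_zero, NNReal.coe_one, mul_one]
  rw [Finset.prod_mul_distrib, ← Real.exp_sum, Finset.prod_const, Finset.card_univ, Fintype.card_fin,
    ← mul_assoc]
  congr 1
  · rw [Matrix.det_mul, Matrix.det_transpose, Real.mul_rpow (by positivity) (mul_self_nonneg _),
      neg_div, Real.rpow_neg (by positivity), Real.rpow_neg (mul_self_nonneg _),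
      ← Real.sqrt_eq_rpow, ← Real.sqrt_eq_rpow, Real.sqrt_mul_self_eq_abs, abs_inv, inv_pow, mul_comm]
    congr 2
    have hs : (2 * Real.pi) ^ n = (√(2 * Real.pi) ^ n) ^ 2 := by
      rw [← pow_mul, mul_comm n 2, pow_mul, Real.sq_sqrt (by positivity)]
    rw [hs, Real.sqrt_sq (by positivity)]
  · congr 1
    rw [← Finset.sum_div, Finset.sum_neg_distrib, Matrix.mul_inv_rev]
    congr 2
    have : u ⬝ᵥ ((Lᵀ)⁻¹ * L⁻¹) *ᵥ u = (L⁻¹ *ᵥ u) ⬝ᵥ (L⁻¹ *ᵥ u) := by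
      rw [← Matrix.mulVec_mulVec, ← Matrix.transpose_nonsing_inv, Matrix.dotProduct_mulVec,
        Matrix.vecMul_transpose]
    rw [this]
    simp [dotProduct, pow_two]


lemma exists_lim {t : ℕ → ℝ} (ht : ∀ k, t k ∈ Set.Ioc (0:ℝ) 1) (htinj : Function.Injective t) :
    ∃ P : Measure (ℕ → ℝ), IsProbabilityMeasure P ∧
      ∀ n, P.map (fun y (i : Fin n) => y i) = gauss n (covM t n) := by
  obtain ⟨L, h1, h2, h3⟩ := exists_chol ht htinj
  let g : (ℕ → ℝ) → (ℕ → ℝ) := fun x n => ∑ j ∈ Finset.range (n+1), L n j * x j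
  have hg : Measurable g := by
    refine measurable_pi_lambda _ fun n => ?_
    exact Finset.measurable_sum _ fun j _ => (measurable_pi_apply j).const_mul _
  refine ⟨(Measure.infinitePi (fun _ : ℕ => gaussianReal 0 1)).map g,
    Measure.isProbabilityMeasure_map hg.aemeasurable, fun n => ?_⟩
  let Ln : Matrix (Fin n) (Fin n) ℝ := Matrix.of fun i j => L i j
  have hdet : Ln.det ≠ 0 := by
    rw [Matrix.det_of_isLowerTriangular]
    · exact Finset.prod_ne_zero_iff.2 fun i _ => h2 i
    · intro i j hij
      exact h1 _ _ hij
  have hM : covM t n = Ln * Lnᵀ := by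
    ext i j
    rw [Matrix.mul_apply]
    simp only [covM, Ln, Matrix.of_apply, Matrix.transpose_apply]
    rw [← h3 n i j i.2 j.2, Finset.sum_range]
  have hr : Measurable (fun (y : ℕ → ℝ) (i : Fin n) => y i) :=
    measurable_pi_lambda _ fun i => measurable_pi_apply _
  have hmul : Measurable (fun x : Fin n → ℝ => Ln.mulVec x) := 
    (Continuous.matrix_mulVec continuous_const continuous_id).measurable
  have hpi : (Measure.infinitePi (fun _ : ℕ => gaussianReal 0 1)).map
      (fun (y : ℕ → ℝ) (i : Fin n) => y i) = Measure.pi (fun _ : Fin n => gaussianReal 0 1) := by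
    refine (Measure.pi_eq fun s hs => ?_).symm
    rw [Measure.map_apply hr (MeasurableSet.univ_pi hs)]
    have : (fun (y : ℕ → ℝ) (i : Fin n) => y i) ⁻¹' (Set.univ.pi s) =
        Set.pi (Finset.range n) (fun k => if h : k < n then s ⟨k, h⟩ else Set.univ) := by
      ext y
      simp only [mem_preimage, Set.mem_pi, mem_univ, true_imp_iff, Finset.coe_range, mem_Iio]
      constructor
      · intro h k hk
        rw [dif_pos hk]; exact h ⟨k, hk⟩
      · intro h i
        have := h i i.2
        rwa [dif_pos i.2] at this
    rw [this, Measure.infinitePi_pi]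
    · rw [Finset.prod_range]
      exact Finset.prod_congr rfl fun i _ => by simp
    · intro i hi
      split_ifs
      · exact hs _
      · exact MeasurableSet.univ
  rw [hM, ← map_gauss Ln hdet, ← hpi, Measure.map_map hr hg, Measure.map_map hmul hr]
  congr 1
  ext x i
  simp only [Function.comp, g, Ln, Matrix.mulVec, dotProduct, Matrix.of_apply]
  rw [← Finset.sum_range (fun j => L i j * x j)]
  refine Finset.sum_subset (Finset.range_subset_range.2 i.2) fun j _ hj => ?_
  rw [h1 _ _ (by simpa using hj), zero_mul]

def evJ (t : ℕ → ℝ) (ht : ∀ k, t k ∈ Set.Ioc (0:ℝ) 1) (x : Cz) : ℕ → ℝ :=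
  fun k => (x : C(Set.Icc (0:ℝ) 1, ℝ)) ⟨t k, Set.Ioc_subset_Icc_self (ht k)⟩

lemma evJ_cont (t : ℕ → ℝ) (ht : ∀ k, t k ∈ Set.Ioc (0:ℝ) 1) : Continuous (evJ t ht) := by
  refine continuous_pi fun k => ?_
  exact (continuous_eval_const _).comp continuous_subtype_val

lemma evJ_inj (t : ℕ → ℝ) (ht : ∀ k, t k ∈ Set.Ioc (0:ℝ) 1)
    (htdense : Set.Icc (0:ℝ) 1 ⊆ closure (Set.range t)) : Function.Injective (evJ t ht) := by
  intro x y h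
  apply Subtype.ext
  apply ContinuousMap.coe_injective
  have hd : Dense (Set.range fun k => (⟨t k, Set.Ioc_subset_Icc_self (ht k)⟩ : Set.Icc (0:ℝ) 1)) := by
    rw [Subtype.dense_iff]
    intro u hu
    rw [← range_comp]
    exact htdense hu
  refine Continuous.ext_on hd (map_continuous _) (map_continuous _) ?_
  rintro _ ⟨k, rfl⟩
  exact congrFun h k

instance : PolishSpace Cz := by
  refine IsClosed.polishSpace (s := {f : C(Set.Icc (0:ℝ) 1, ℝ) | f ⟨0, ⟨le_refl 0, zero_le_one⟩⟩ = 0}) ?_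
  exact isClosed_eq (continuous_eval_const _) continuous_const

lemma phi_eq {t : ℕ → ℝ} (ht : ∀ k, t k ∈ Set.Ioc (0:ℝ) 1)
    {P : Measure (ℕ → ℝ)} [IsProbabilityMeasure P]
    (hP : ∀ n, P.map (fun y (i : Fin n) => y i) = gauss n (covM t n))
    {K : Set Cz} (hK : IsCompact K) : phi t ht K = P (evJ t ht '' K) := by
  let r : ∀ n, (ℕ → ℝ) → (Fin n → ℝ) := fun n y i => y i
  have hrc : ∀ n, Continuous (r n) := fun n => continuous_pi fun i => continuous_apply _
  have hpr : ∀ n x, proj t ht n x = r n (evJ t ht x) := fun n x => rfl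
  have hpc : ∀ n, Continuous (proj t ht n) := fun n => (hrc n).comp (evJ_cont t ht)
  let S : ℕ → Set (ℕ → ℝ) := fun n => r (n+1) ⁻¹' (proj t ht (n+1) '' K)
  have hSm : ∀ n, MeasurableSet (proj t ht (n+1) '' K) :=
    fun n => (hK.image (hpc _)).isClosed.measurableSet
  have hSmeas : ∀ n, MeasurableSet (S n) := fun n => (hrc _).measurable (hSm n)
  have hanti : Antitone S := by
    intro m n hmn y hy
    obtain ⟨x, hx, hxy⟩ := hy
    refine ⟨x, hx, ?_⟩
    ext i
    exact congrFun hxy ⟨i, by omega⟩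
  have hI : evJ t ht '' K = ⋂ n, S n := by
    apply Subset.antisymm
    · rintro _ ⟨x, hx, rfl⟩
      exact mem_iInter.2 fun n => ⟨x, hx, rfl⟩
    · intro y hy
      have hcl : ∀ n, IsClosed {x : Cz | proj t ht (n+1) x = r (n+1) y} :=
        fun n => isClosed_eq (hpc _) continuous_const
      obtain ⟨x, hx⟩ := IsCompact.nonempty_iInter_of_sequence_nonempty_isCompact_isClosed
        (fun n => K ∩ {x : Cz | proj t ht (n+1) x = r (n+1) y})
        (fun n x hx => ⟨hx.1, by
          ext i
          exact congrFun hx.2 ⟨i, by omega⟩⟩)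
        (fun n => by
          obtain ⟨x, hx, hxy⟩ := mem_iInter.1 hy n
          exact ⟨x, hx, hxy⟩)
        (hK.inter_right (hcl 0)) (fun n => hK.isClosed.inter (hcl n))
      rw [mem_iInter] at hx
      refine ⟨x, (hx 0).1, ?_⟩
      ext k
      exact congrFun (hx k).2 ⟨k, by omega⟩
  rw [hI, hanti.measure_iInter (fun n => (hSmeas n).nullMeasurableSet) ⟨0, measure_ne_top _ _⟩, phi]
  refine iInf_congr fun n => ?_
  rw [← hP, Measure.map_apply (hrc _).measurable (hSm n)]

/-- if Borel sets `A_m` increase to `A = ⋃_m A_m`, then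
`μ(A_m) → μ(A)`. -/
theorem stmt13 (t : ℕ → ℝ) (ht : ∀ k, t k ∈ Set.Ioc (0:ℝ) 1)
    (htinj : Function.Injective t)
    (htdense : Set.Icc (0:ℝ) 1 ⊆ closure (Set.range t))
    (A : ℕ → Set Cz) (hA : ∀ m, MeasurableSet (A m)) (hmono : Monotone A) :
    Tendsto (fun m => mu t ht (A m)) atTop (𝓝 (mu t ht (⋃ m, A m))) := by
  obtain ⟨P, hPp, hP⟩ := exists_lim ht htinj
  have hemb : MeasurableEmbedding (evJ t ht) :=
    (evJ_cont t ht).measurableEmbedding (evJ_inj t ht htdense)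
  let Q : Measure Cz := P.comap (evJ t ht)
  have hQ : ∀ s, Q s = P (evJ t ht '' s) := fun s => hemb.comap_apply P s
  have : IsFiniteMeasure Q := ⟨by rw [hQ]; exact measure_lt_top _ _⟩
  have hmu : ∀ B : Set Cz, MeasurableSet B → mu t ht B = Q B := by
    intro B hB
    rw [hB.measure_eq_iSup_isCompact, mu]
    refine iSup_congr fun K => iSup_congr fun _ => iSup_congr fun hK => ?_
    rw [phi_eq ht hP hK, hQ]
  simp_rw [hmu _ (hA _)]
  rw [hmu _ (MeasurableSet.iUnion hA)]
  exact tendsto_measure_iUnion_atTop hmono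

end
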